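/- Bellman fixed-point property of the upper value: Let 𝒢 = ⟨A, Φ_(Pr,R)⟩ be a 2½-player parity game with arena A = ⟨(S,E),(S₁,S₂,S_N),π⟩ and parity structure (Pr,R). Then the function Val↑(𝒢) : S → [0,1] is a fixed point of the functional 𝓕 : (S → [0,1]) → (S → [0,1]) defined by: 𝓕(f)(s) = R(s) if s is a terminal state; 𝓕(f)(s) = ⨆_{t ∈ E(s)} f(t) if s ∈ S₁; 𝓕(f)(s) = ⨅_{t ∈ E(s)} f(t) if s ∈ S₂; and 𝓕(f)(s) = ∑_{t ∈ E(s)} π(s)(t)·f(t) if s ∈ S_N. -/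

import Mathlib

noncomputable section

open scoped unitInterval Classical

/-- The three agents of a 2½-player game. -/
inductive Player : Type
  | one : Player
  | two : Player
  | nature : Player
deriving DecidableEq

/-- A 2½-player arena: a directed graph `(S, E)`, an assignment of states to the
players (Player 1, Player 2, Nature), and probabilistic transition data at Nature
states. -/
structure Arena (S : Type) where
  E : S → Set S
  owner : S → Player
  prob : S → S → ℝ

namespace Arena

variable {S : Type}

/-- Well-formedness: at every Nature state `s`, `prob s` is a probability
distribution whose support is exactly the set `E s` of successors of `s`. -/
def Wellformed (A : Arena S) : Prop :=
  ∀ s, A.owner s = Player.nature →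
    (∀ t, 0 ≤ A.prob s t) ∧ HasSum (A.prob s) 1 ∧ A.E s = Function.support (A.prob s)

/-- `s` is a terminal state if it has no successors. -/
def Terminal (A : Arena S) (s : S) : Prop := A.E s = ∅

end Arena

/-- An (unbounded memory deterministic) strategy for player `pl` in arena `A`:
given the history `hist` and the current state `s` (a non-terminal state owned by
`pl`), it picks a successor of `s`. -/
structure Strategy {S : Type} (A : Arena S) (pl : Player) where
  next : List S → S → S
  valid : ∀ (hist : List S) (s : S), A.owner s = pl → A.E s ≠ ∅ → next hist s ∈ A.E s

variable {S : Type}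

/-- The Markov chain determined by a strategy profile `(σ1, σ2)` and initial state
`s0`: the tree of finite paths from `s0` in which nodes ending in a Player 1
(resp. Player 2) state are extended uniquely according to `σ1` (resp. `σ2`), nodes
ending in a Nature state branch fully over the successors, and (for the purpose of
encoding finite completed paths as infinite sequences) nodes ending in a terminal
state are extended by repeating the terminal state. -/
inductive MC (A : Arena S) (σ1 : Strategy A Player.one) (σ2 : Strategy A Player.two)
    (s0 : S) : List S → Prop
  | root : MC A σ1 σ2 s0 [s0]
  | one (l : List S) (s : S) : MC A σ1 σ2 s0 (l ++ [s]) → A.owner s = Player.one →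
      A.E s ≠ ∅ → MC A σ1 σ2 s0 (l ++ [s, σ1.next l s])
  | two (l : List S) (s : S) : MC A σ1 σ2 s0 (l ++ [s]) → A.owner s = Player.two →
      A.E s ≠ ∅ → MC A σ1 σ2 s0 (l ++ [s, σ2.next l s])
  | nature (l : List S) (s t : S) : MC A σ1 σ2 s0 (l ++ [s]) →
      A.owner s = Player.nature → t ∈ A.E s → MC A σ1 σ2 s0 (l ++ [s, t])
  | term (l : List S) (s : S) : MC A σ1 σ2 s0 (l ++ [s]) → A.E s = ∅ →
      MC A σ1 σ2 s0 (l ++ [s, s])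

/-- The space of completed paths, encoded as infinite sequences of states
(a finite completed path, i.e. one ending in a terminal state, is encoded by
repeating its terminal state forever). -/
def PathSpace (S : Type) : Type := ℕ → S

instance : MeasurableSpace (PathSpace S) :=
  @MeasurableSpace.pi ℕ (fun _ => S) (fun _ => ⊤)

/-- The basic cylinder set of completed paths extending a finite path. -/
def cyl (l : List S) : Set (PathSpace S) :=
  {u | ∀ i : Fin l.length, u i = l.get i}

/-- the probability of a single step -/
def stepProb (A : Arena S) (s t : S) : ℝ :=
  if A.owner s = Player.nature then A.prob s t else 1

/-- The product of the probabilities of the Nature steps along a finite path. -/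
def pathProb (A : Arena S) : List S → ℝ
  | [] => 1
  | [_] => 1
  | s :: t :: l => stepProb A s t * pathProb A (t :: l)

/-- The weight assigned to a basic cylinder: the product of the probabilities of its
Nature steps if the underlying finite path belongs to the Markov chain, `0` otherwise. -/
def cylWeight (A : Arena S) (σ1 : Strategy A Player.one) (σ2 : Strategy A Player.two)
    (s0 : S) (l : List S) : ℝ :=
  if MC A σ1 σ2 s0 l then pathProb A l else 0

/-- The Borel probability measure on completed paths induced by the Markov chain
`M^{s0}_{σ1,σ2}`: the unique probability measure assigning to every basic cylinder
its weight. -/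
def pathMeasure (A : Arena S) (σ1 : Strategy A Player.one) (σ2 : Strategy A Player.two)
    (s0 : S) : MeasureTheory.Measure (PathSpace S) :=
  if h : ∃ μ : MeasureTheory.Measure (PathSpace S), MeasureTheory.IsProbabilityMeasure μ ∧
      ∀ l : List S, l ≠ [] → μ (cyl l) = ENNReal.ofReal (cylWeight A σ1 σ2 s0 l)
  then h.choose else 0

/-- The payoff function induced by a parity structure `(pri, R)`: a completed path
reaching a terminal state gets the reward `R` of (the first occurrence of) that
terminal state; an infinite path gets `1` if the greatest priority occurring
infinitely often along it is even, and `0` otherwise. -/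
def payoff (A : Arena S) (pri : S → ℕ) (R : S → ℝ) (u : PathSpace S) : ℝ :=
  if h : ∃ i, A.E (u i) = ∅ then R (u (Nat.find h))
  else if Even (sSup {n | {i | pri (u i) = n}.Infinite}) then 1 else 0

/-- The expected reward of Player 1 for the Markov chain `M^{s0}_{σ1,σ2}`:
the integral of the payoff against the induced probability measure on paths. -/
def expReward (A : Arena S) (pri : S → ℕ) (R : S → ℝ) (σ1 : Strategy A Player.one)
    (σ2 : Strategy A Player.two) (s0 : S) : ℝ :=
  ∫ u, payoff A pri R u ∂(pathMeasure A σ1 σ2 s0)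

/-- The lower value `Val↓` of the 2½-player parity game `⟨A, Φ_(pri,R)⟩`. -/
def lowerValue (A : Arena S) (pri : S → ℕ) (R : S → ℝ) (s : S) : ℝ :=
  ⨆ σ1 : Strategy A Player.one, ⨅ σ2 : Strategy A Player.two, expReward A pri R σ1 σ2 s

/-- The upper value `Val↑` of the 2½-player parity game `⟨A, Φ_(pri,R)⟩`. -/
def upperValue (A : Arena S) (pri : S → ℕ) (R : S → ℝ) (s : S) : ℝ :=
  ⨅ σ2 : Strategy A Player.two, ⨆ σ1 : Strategy A Player.one, expReward A pri R σ1 σ2 s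

/-- The Bellman functional `𝓕` on `S → ℝ` associated to the game `⟨A, Φ_(pri,R)⟩`. -/
def bellman (A : Arena S) (R : S → ℝ) (f : S → ℝ) : S → ℝ := fun s =>
  if A.E s = ∅ then R s
  else match A.owner s with
    | Player.one => sSup (f '' A.E s)
    | Player.two => sInf (f '' A.E s)
    | Player.nature => ∑' t : A.E s, A.prob s t * f t

/-!
The path measure of a strategy profile is the law of a random path with history-dependent
transitions. Such a law exists because a path can be sampled from independent choices, one for every
history, and it is unique because almost every path stays in countably many histories of each
length. Conditioning on the first move splits it into the laws of the continuations, which are path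
measures of the continuations of the strategies.

Removing a non-terminal first state does not change the payoff of a path, so the expected payoff
from `s` is the expectation, over the first move, of the expected payoffs of the continuations.
Gluing `ε`-optimal continuations, one for every possible second state, behind a first move turns
this into `V s = ⨅ σ2, ⨆ σ1, E[V (successor of s)]` for the upper value `V`. Depending on the owner
of `s`, the first move is controlled by one of the players or by Nature, which gives the three
non-terminal cases of the Bellman functional.
-/

section PathLaws

open MeasureTheory

/-! ### Cylinders -/

theorem mem_cyl_iff {l : List S} {u : PathSpace S} :
    u ∈ cyl l ↔ ∀ i, ∀ h : i < l.length, u i = l[i] :=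
  Fin.forall_iff

@[simp]
theorem cyl_nil : cyl ([] : List S) = Set.univ :=
  Set.eq_univ_of_forall fun _ => mem_cyl_iff.2 (by simp)

theorem mem_cyl_concat {l : List S} {t : S} {u : PathSpace S} :
    u ∈ cyl (l ++ [t]) ↔ u ∈ cyl l ∧ u l.length = t := by
  simp only [mem_cyl_iff, List.length_append, List.length_singleton, Nat.forall_lt_succ_right']
  constructor
  · rintro ⟨hl, ht⟩
    exact ⟨fun i h => by rw [hl i h, List.getElem_append_left h], by simpa using ht⟩
  · rintro ⟨hl, ht⟩
    exact ⟨fun i h => by rw [hl i h, List.getElem_append_left h], by simpa using ht⟩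

theorem eq_of_mem_cyl {l l' : List S} {u : PathSpace S} (hlen : l.length = l'.length)
    (hu : u ∈ cyl l) (hu' : u ∈ cyl l') : l = l' :=
  List.ext_getElem hlen fun i h h' => by rw [← mem_cyl_iff.1 hu i h, ← mem_cyl_iff.1 hu' i h']

theorem pairwiseDisjoint_cyl {C : Set (List S)} {n : ℕ} (hC : ∀ l ∈ C, l.length = n) :
    C.PairwiseDisjoint cyl := fun l hl l' hl' hne =>
  Set.disjoint_left.2 fun _ hu hu' =>
    hne (eq_of_mem_cyl ((hC l hl).trans (hC l' hl').symm) hu hu')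

theorem measurable_comp_coord {β : Type*} [MeasurableSpace β] (g : S → β) (n : ℕ) :
    Measurable fun u : PathSpace S => g (u n) := by
  let _ : MeasurableSpace S := ⊤
  exact measurable_from_top.comp (measurable_pi_apply (X := fun _ : ℕ => S) n)

theorem measurableSet_coord (p : S → Prop) (n : ℕ) :
    MeasurableSet {u : PathSpace S | p (u n)} :=
  measurableSet_setOfPred.2 (measurable_comp_coord p n)

theorem measurableSet_cyl (l : List S) : MeasurableSet (cyl l) := by
  rw [cyl, Set.ofPred_forall]
  exact .iInter fun i => measurableSet_coord (· = l.get i) i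

theorem inter_iUnion_cyl {B : Set (PathSpace S)} {C : Set (List S)} {n : ℕ}
    (hB : ∀ u v : PathSpace S, (∀ i < n, u i = v i) → u ∈ B → v ∈ B)
    (hC : ∀ l ∈ C, n ≤ l.length) :
    B ∩ ⋃ l ∈ C, cyl l = ⋃ l ∈ {l ∈ C | cyl l ⊆ B}, cyl l := by
  ext u
  simp only [Set.mem_inter_iff, Set.mem_iUnion, exists_prop]
  constructor
  · rintro ⟨huB, l, hl, hu⟩
    refine ⟨l, ⟨hl, fun v hv => hB u v (fun i hi => ?_) huB⟩, hu⟩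
    have hi : i < l.length := hi.trans_le (hC l hl)
    rw [mem_cyl_iff.1 hu i hi, mem_cyl_iff.1 hv i hi]
  · rintro ⟨l, ⟨hl, hlB⟩, hu⟩
    exact ⟨hlB hu, l, hl, hu⟩

/-! ### Random paths with history-dependent transitions -/

/-- `μ` is the law of a random path whose state at time `n` has distribution `K l` given that its
first `n` states form the list `l`; in particular `K []` is the distribution of the first state. -/
structure IsPathLaw (K : List S → PMF S) (μ : Measure (PathSpace S)) : Prop where
  isProbabilityMeasure : IsProbabilityMeasure μ
  measure_cyl_concat : ∀ l t, μ (cyl (l ++ [t])) = μ (cyl l) * K l t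

/-- The histories of length `n` that have positive probability under the transitions `K`. -/
def reachableHistories (K : List S → PMF S) : ℕ → Set (List S)
  | 0 => {[]}
  | n + 1 => ⋃ l ∈ reachableHistories K n, (fun t => l ++ [t]) '' (K l).support

theorem countable_reachableHistories (K : List S → PMF S) (n : ℕ) :
    (reachableHistories K n).Countable := by
  induction n with
  | zero => exact Set.countable_singleton _
  | succ n ih => exact ih.biUnion fun l _ => (K l).support_countable.image _

theorem length_of_mem_reachableHistories {K : List S → PMF S} {n : ℕ} :
    ∀ l ∈ reachableHistories K n, l.length = n := by
  induction n with
  | zero => simp [reachableHistories]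
  | succ n ih =>
    simp only [reachableHistories, Set.mem_iUnion, Set.mem_image]
    rintro _ ⟨l, hl, t, -, rfl⟩
    simp [ih l hl]

section Sampling

variable {K : List S → PMF S}

/-- The first `n` states of the path that moves, after the history `l`, to the state `ω l`. Letting
`ω l` range over the countable type `(K l).support` is what makes the path measurable in `ω`,
however large `S` is. -/
def sampleHistory (ω : ∀ l, (K l).support) : ℕ → List S
  | 0 => []
  | n + 1 => sampleHistory ω n ++ [(ω (sampleHistory ω n) : S)]

/-- The path that moves, after the history `l`, to the state `ω l`. -/
def samplePath (ω : ∀ l, (K l).support) : PathSpace S :=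
  fun n => ω (sampleHistory ω n)

theorem length_sampleHistory (ω : ∀ l, (K l).support) (n : ℕ) :
    (sampleHistory ω n).length = n := by
  induction n with
  | zero => rfl
  | succ n ih => simp [sampleHistory, ih]

theorem samplePath_mem_cyl_sampleHistory (ω : ∀ l, (K l).support) (n : ℕ) :
    samplePath ω ∈ cyl (sampleHistory ω n) := by
  induction n with
  | zero => simp [sampleHistory]
  | succ n ih =>
    rw [sampleHistory, mem_cyl_concat, length_sampleHistory]
    exact ⟨ih, rfl⟩

theorem sampleHistory_mem_reachableHistories (ω : ∀ l, (K l).support) (n : ℕ) :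
    sampleHistory ω n ∈ reachableHistories K n := by
  induction n with
  | zero => rfl
  | succ n ih => exact Set.mem_biUnion ih (Set.mem_image_of_mem _ (ω _).2)

theorem samplePath_mem_iUnion_cyl (ω : ∀ l, (K l).support) (n : ℕ) :
    samplePath ω ∈ ⋃ l ∈ reachableHistories K n, cyl l :=
  Set.mem_biUnion (sampleHistory_mem_reachableHistories ω n)
    (samplePath_mem_cyl_sampleHistory ω n)

theorem samplePath_mem_cyl_concat {ω : ∀ l, (K l).support} {l : List S} {t : S} :
    samplePath ω ∈ cyl (l ++ [t]) ↔ samplePath ω ∈ cyl l ∧ (ω l : S) = t := by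
  rw [mem_cyl_concat]
  refine and_congr_right fun hl => ?_
  have hhistory : sampleHistory ω l.length = l :=
    eq_of_mem_cyl (length_sampleHistory ω _) (samplePath_mem_cyl_sampleHistory ω _) hl
  rw [samplePath, hhistory]

theorem samplePath_mem_cyl_iff {ω : ∀ l, (K l).support} {l : List S} :
    samplePath ω ∈ cyl l ↔ ∀ p t, p ++ [t] <+: l → (ω p : S) = t := by
  induction l using List.reverseRecOn with
  | nil => simp
  | append_singleton l a ih =>
    rw [samplePath_mem_cyl_concat, ih]
    constructor
    · rintro ⟨hl, ha⟩ p t hp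
      rcases List.prefix_concat_iff.1 hp with heq | hp
      · obtain ⟨rfl, hta⟩ := List.append_inj' heq rfl
        exact ha.trans (List.singleton_inj.1 hta).symm
      · exact hl p t hp
    · exact fun h => ⟨fun p t hp => h p t (hp.trans (List.prefix_append ..)), h l a List.prefix_rfl⟩

theorem measurableSet_samplePath_mem_cyl [MeasurableSpace S] [MeasurableSingletonClass S]
    (l : List S) : MeasurableSet {ω : ∀ l, (K l).support | samplePath ω ∈ cyl l} := by
  induction l using List.reverseRecOn with
  | nil => simp
  | append_singleton l t ih =>
    simp only [samplePath_mem_cyl_concat]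
    exact ih.inter ((measurable_subtype_coe.comp (measurable_pi_apply l))
      (measurableSet_singleton t))

theorem measurable_samplePath [MeasurableSpace S] [MeasurableSingletonClass S] :
    Measurable (samplePath (K := K)) := by
  refine @measurable_pi_iff _ _ _ _ (fun _ => ⊤) _ |>.2 fun n B _ => ?_
  have hB : ∀ u v : PathSpace S, (∀ i < n + 1, u i = v i) → u ∈ {u | u n ∈ B} → v ∈ {u | u n ∈ B} :=
    fun u v huv hu => by simpa only [Set.mem_ofPred_eq, huv n n.lt_succ_self] using hu
  have hpre : {ω : ∀ l, (K l).support | samplePath ω n ∈ B} =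
      ⋃ l ∈ {l ∈ reachableHistories K (n + 1) | cyl l ⊆ {u | u n ∈ B}},
        {ω | samplePath ω ∈ cyl l} := by
    have hinter := inter_iUnion_cyl hB fun l hl =>
      (length_of_mem_reachableHistories (K := K) l hl).ge
    ext ω
    simpa [samplePath_mem_iUnion_cyl ω (n + 1)] using Set.ext_iff.1 hinter (samplePath ω)
  exact (congrArg MeasurableSet hpre).mpr
    (.biUnion ((countable_reachableHistories K _).mono (Set.sep_subset _ _))
      fun l _ => measurableSet_samplePath_mem_cyl l)

theorem toMeasure_comap_coe_support {α : Type*} [MeasurableSpace α] [DiscreteMeasurableSpace α]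
    (p : PMF α) (B : Set α) :
    p.toMeasure.comap ((↑) : p.support → α) {x | (x : α) ∈ B} = p.toMeasure B := by
  rw [comap_subtype_coe_apply MeasurableSet.of_discrete,
    ← p.toMeasure_apply_inter_support (s := B) MeasurableSet.of_discrete]
  congr 1
  ext x
  simp [and_comm]

instance isProbabilityMeasure_comap_coe_support {α : Type*} [MeasurableSpace α]
    [DiscreteMeasurableSpace α] (p : PMF α) :
    IsProbabilityMeasure (p.toMeasure.comap ((↑) : p.support → α)) :=
  ⟨by simpa using toMeasure_comap_coe_support p Set.univ⟩

/-- The law of `samplePath ω` when the choices `ω l` are independent with distributions `K l`. -/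
def pathLaw (K : List S → PMF S) : Measure (PathSpace S) :=
  let _ : MeasurableSpace S := ⊤
  (Measure.infinitePi fun l => (K l).toMeasure.comap ((↑) : (K l).support → S)).map samplePath

theorem measure_samplePath_mem_cyl_concat [MeasurableSpace S] [DiscreteMeasurableSpace S]
    (l : List S) (t : S) :
    let P := Measure.infinitePi fun l => (K l).toMeasure.comap ((↑) : (K l).support → S)
    P {ω | samplePath ω ∈ cyl (l ++ [t])} = P {ω | samplePath ω ∈ cyl l} * K l t := by
  intro P
  have (p : List S) : DiscreteMeasurableSpace (K p).support :=
    have := (K p).support_countable.to_subtype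
    MeasurableSingletonClass.toDiscreteMeasurableSpace
  let F : Finset (List S) := l.inits.toFinset.erase l
  let B (p : List S) : Set (K p).support := {x | ∀ t, p ++ [t] <+: l → (x : S) = t}
  let B' := Function.update B l {x | (x : S) = t}
  have hF : l ∉ F := Finset.notMem_erase l _
  have hB' : ∀ p ∈ F, B' p = B p := fun p hp =>
    Function.update_of_ne (ne_of_mem_of_not_mem hp hF) _ _
  have hB'l : B' l = {x : (K l).support | (x : S) = t} := Function.update_self ..
  have hcyl : {ω | samplePath ω ∈ cyl l} = Set.pi F B := by
    ext ω
    refine samplePath_mem_cyl_iff.trans ⟨fun h p _ => h p, fun h p t hp => h p ?_ t hp⟩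
    have hne : p ≠ l := by rintro rfl; simpa using hp.length_le
    simpa [F, hne] using (List.prefix_append p [t]).trans hp
  have hcyl' : {ω | samplePath ω ∈ cyl (l ++ [t])} = Set.pi ↑(insert l F) B' := by
    ext ω
    rw [Finset.coe_insert, Set.insert_pi, Set.pi_congr rfl hB', ← hcyl, Set.mem_inter_iff,
      and_comm]
    simp [samplePath_mem_cyl_concat, B', Function.eval]
  have hKt : (K l).toMeasure.comap ((↑) : (K l).support → S) {x | (x : S) = t} = K l t :=
    (toMeasure_comap_coe_support (K l) {t}).trans
      ((K l).toMeasure_apply_singleton t (measurableSet_singleton t))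
  rw [hcyl, hcyl', Measure.infinitePi_pi _ fun _ _ => MeasurableSet.of_discrete,
    Measure.infinitePi_pi _ fun _ _ => MeasurableSet.of_discrete, Finset.prod_insert hF,
    Finset.prod_congr rfl fun p hp => by rw [hB' p hp], hB'l, hKt, mul_comm]

theorem isPathLaw_pathLaw (K : List S → PMF S) : IsPathLaw K (pathLaw K) := by
  let _ : MeasurableSpace S := ⊤
  refine ⟨Measure.isProbabilityMeasure_map measurable_samplePath.aemeasurable, fun l t => ?_⟩
  simp only [pathLaw, Measure.map_apply measurable_samplePath (measurableSet_cyl _)]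
  exact measure_samplePath_mem_cyl_concat l t

instance (K : List S → PMF S) : IsProbabilityMeasure (pathLaw K) :=
  (isPathLaw_pathLaw K).isProbabilityMeasure

theorem pathLaw_iUnion_cyl (K : List S → PMF S) (n : ℕ) :
    pathLaw K (⋃ l ∈ reachableHistories K n, cyl l) = 1 := by
  let _ : MeasurableSpace S := ⊤
  rw [pathLaw, Measure.map_apply measurable_samplePath (.biUnion (countable_reachableHistories K n)
      fun l _ => measurableSet_cyl l),
    Set.preimage_eq_univ_iff.2 (Set.range_subset_iff.2 fun ω => samplePath_mem_iUnion_cyl ω n),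
    measure_univ]

end Sampling

namespace IsPathLaw

variable {K : List S → PMF S} {μ ν : Measure (PathSpace S)}

theorem measure_cyl_eq (hμ : IsPathLaw K μ) (hν : IsPathLaw K ν) (l : List S) :
    μ (cyl l) = ν (cyl l) := by
  have := hμ.isProbabilityMeasure
  have := hν.isProbabilityMeasure
  induction l using List.reverseRecOn with
  | nil => simp
  | append_singleton l t ih => rw [hμ.measure_cyl_concat, hν.measure_cyl_concat, ih]

theorem measure_iUnion_cyl_eq (hμ : IsPathLaw K μ) (hν : IsPathLaw K ν) {C : Set (List S)}
    (hC : C.Countable) {n : ℕ} (hlen : ∀ l ∈ C, l.length = n) :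
    μ (⋃ l ∈ C, cyl l) = ν (⋃ l ∈ C, cyl l) := by
  simp only [measure_biUnion hC (pairwiseDisjoint_cyl hlen) fun l _ => measurableSet_cyl l,
    hμ.measure_cyl_eq hν]

theorem measure_eq_of_dependsOn (hμ : IsPathLaw K μ) (hν : IsPathLaw K ν)
    {B : Set (PathSpace S)} {n : ℕ}
    (hB : ∀ u v : PathSpace S, (∀ i < n, u i = v i) → u ∈ B → v ∈ B) : μ B = ν B := by
  set C := reachableHistories K n
  have hC : C.Countable := countable_reachableHistories K n
  have hlen : ∀ l ∈ C, l.length = n := length_of_mem_reachableHistories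
  have hinter : ∀ {ρ}, IsPathLaw K ρ → ρ B = ρ (⋃ l ∈ {l ∈ C | cyl l ⊆ B}, cyl l) := by
    intro ρ hρ
    have := hρ.isProbabilityMeasure
    have hfull : ρ (⋃ l ∈ C, cyl l)ᶜ = 0 := by
      rw [prob_compl_eq_zero_iff (.biUnion hC fun l _ => measurableSet_cyl l),
        hρ.measure_iUnion_cyl_eq (isPathLaw_pathLaw K) hC hlen, pathLaw_iUnion_cyl]
    rw [← inter_iUnion_cyl hB fun l hl => (hlen l hl).ge, measure_inter_conull hfull]
  rw [hinter hμ, hinter hν, hμ.measure_iUnion_cyl_eq hν (hC.mono (Set.sep_subset _ _))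
    fun l hl => hlen l hl.1]

protected theorem unique (hμ : IsPathLaw K μ) (hν : IsPathLaw K ν) : μ = ν := by
  let _ : MeasurableSpace S := ⊤
  have := hμ.isProbabilityMeasure
  have := hν.isProbabilityMeasure
  refine ext_of_generate_finite (measurableCylinders fun _ : ℕ => S)
    generateFrom_measurableCylinders.symm isPiSystem_measurableCylinders ?_ (by simp)
  intro B hB
  obtain ⟨F, T, -, rfl⟩ := (mem_measurableCylinders B).1 hB
  refine hμ.measure_eq_of_dependsOn hν (n := F.sup id + 1) fun u v huv hu => ?_
  have hrestrict : F.restrict u = F.restrict v :=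
    funext fun i => huv i (Nat.lt_succ_of_le (Finset.le_sup (f := id) i.2))
  change F.restrict v ∈ T
  rw [← hrestrict]
  exact hu

theorem eq_pathLaw (hμ : IsPathLaw K μ) : μ = pathLaw K := hμ.unique (isPathLaw_pathLaw K)

end IsPathLaw

namespace PathSpace

/-- The path that starts in `s` and continues as `u`. -/
def cons (s : S) (u : PathSpace S) : PathSpace S
  | 0 => s
  | n + 1 => u n

theorem measurable_cons (s : S) : Measurable (cons s) := by
  refine @measurable_pi_iff _ _ _ _ (fun _ => ⊤) _ |>.2 fun n => ?_
  let _ : MeasurableSpace S := ⊤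
  cases n with
  | zero => exact measurable_const
  | succ n => exact measurable_comp_coord id n

theorem cons_mem_cyl_cons {s a : S} {l : List S} {u : PathSpace S} :
    cons s u ∈ cyl (a :: l) ↔ s = a ∧ u ∈ cyl l := by
  simp only [mem_cyl_iff, List.length_cons, Nat.forall_lt_succ_left']
  rfl

end PathSpace

open PathSpace

theorem pathLaw_eq_sum_map_cons (K : List S → PMF S) :
    pathLaw K = Measure.sum fun s => K [] s • (pathLaw fun l => K (s :: l)).map (cons s) := by
  set μ := Measure.sum fun s => K [] s • (pathLaw fun l => K (s :: l)).map (cons s)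
  have hμ : ∀ B, MeasurableSet B →
      μ B = ∑' s, K [] s * pathLaw (fun l => K (s :: l)) (cons s ⁻¹' B) := fun B hB => by
    simp [μ, Measure.sum_apply _ hB, Measure.map_apply (measurable_cons _) hB]
  have huniv : μ Set.univ = 1 := by simp [hμ _ .univ, (K []).tsum_coe]
  have hcons : ∀ a l, μ (cyl (a :: l)) = K [] a * pathLaw (fun l => K (a :: l)) (cyl l) := by
    intro a l
    rw [hμ _ (measurableSet_cyl _), tsum_eq_single a fun s hs => ?_]
    · simp [Set.preimage, cons_mem_cyl_cons]
    · simp [Set.preimage, cons_mem_cyl_cons, hs]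
  refine (IsPathLaw.eq_pathLaw ⟨⟨huniv⟩, fun l t => ?_⟩).symm
  cases l with
  | nil => simp [hcons, huniv]
  | cons a l =>
    rw [List.cons_append, hcons, hcons, (isPathLaw_pathLaw _).measure_cyl_concat, mul_assoc]

theorem pathLaw_eq_map_cons {K : List S → PMF S} {s : S} (hs : K [] = PMF.pure s) :
    pathLaw K = (pathLaw fun l => K (s :: l)).map (cons s) := by
  rw [pathLaw_eq_sum_map_cons, hs]
  ext B hB
  rw [Measure.sum_apply _ hB, tsum_eq_single s fun t ht => by simp [ht]]
  simp

end PathLaws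

/-! ### Strategies -/

namespace Strategy

variable {A : Arena S} {pl : Player}

instance : Nonempty (Strategy A pl) :=
  ⟨⟨fun _ c => if h : (A.E c).Nonempty then h.some else c, fun _ c _ hE => by
    rw [dif_pos (Set.nonempty_iff_ne_empty.2 hE)]
    exact Set.Nonempty.some_mem _⟩⟩

/-- The way `τ` continues after a play has moved on from its initial state `s`. -/
def tail (τ : Strategy A pl) (s : S) : Strategy A pl where
  next h c := τ.next (s :: h) c
  valid h c := τ.valid (s :: h) c

/-- Play `τ` in the initial state and, once the play has moved on to a state `t`, follow `g t`,
forgetting the initial state. The second state of the play is `h.headD c` if its current state is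
`c` and its previous states after the initial one form the list `h`. -/
def prepend (τ : Strategy A pl) (g : S → Strategy A pl) : Strategy A pl where
  next
    | [], c => τ.next [] c
    | _ :: h, c => (g (h.headD c)).next h c
  valid
    | [], c => τ.valid [] c
    | _ :: h, c => (g (h.headD c)).valid h c

/-- `ρ` and `ρ'` make the same choices along every path that starts in `t`. -/
def AgreesFrom (t : S) (ρ ρ' : Strategy A pl) : Prop :=
  ∀ (h : List S) (c : S), h.headD c = t → ρ.next h c = ρ'.next h c

theorem AgreesFrom.refl (t : S) (τ : Strategy A pl) : AgreesFrom t τ τ := fun _ _ _ => rfl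

theorem agreesFrom_tail_prepend (τ : Strategy A pl) (g : S → Strategy A pl) (s t : S) :
    AgreesFrom t ((τ.prepend g).tail s) (g t) := by
  rintro h c rfl
  rfl

theorem range_next_nil {s : S} (ho : A.owner s = pl) (hs : A.E s ≠ ∅) :
    Set.range (fun τ : Strategy A pl => τ.next [] s) = A.E s := by
  refine (Set.range_subset_iff.2 fun τ => τ.valid [] s ho hs).antisymm fun t ht => ?_
  obtain ⟨ρ⟩ : Nonempty (Strategy A pl) := inferInstance
  refine ⟨⟨fun h c => if c = s then t else ρ.next h c, fun h c hc hE => ?_⟩, if_pos rfl⟩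
  split_ifs with hcs
  · exact hcs ▸ ht
  · exact ρ.valid h c hc hE

end Strategy

/-! ### The Markov chain of a strategy profile -/

theorem Arena.Wellformed.E_ne_empty {A : Arena S} (hA : A.Wellformed) {s : S}
    (hs : A.owner s = Player.nature) : A.E s ≠ ∅ := by
  obtain ⟨-, hsum, hE⟩ := hA s hs
  rw [hE, Ne, Function.support_eq_empty_iff]
  rintro hzero
  exact zero_ne_one (hasSum_zero.unique (hzero ▸ hsum))

section Transitions

variable {A : Arena S} (hA : A.Wellformed) (σ1 τ1 : Strategy A Player.one)
  (σ2 τ2 : Strategy A Player.two) {h : List S} {s t s0 : S}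

/-- The distribution `π(s)` of the successor of a Nature state `s`. -/
def naturePMF (hs : A.owner s = Player.nature) : PMF S :=
  ⟨fun t => ENNReal.ofReal (A.prob s t), by
    obtain ⟨hnonneg, hsum, -⟩ := hA s hs
    rw [ENNReal.summable.hasSum_iff, ← ENNReal.ofReal_tsum_of_nonneg hnonneg hsum.summable,
      hsum.tsum_eq, ENNReal.ofReal_one]⟩

theorem naturePMF_apply (hs : A.owner s = Player.nature) (t : S) :
    naturePMF hA hs t = ENNReal.ofReal (A.prob s t) := rfl

theorem naturePMF_ne_zero_iff (hs : A.owner s = Player.nature) :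
    naturePMF hA hs t ≠ 0 ↔ t ∈ A.E s := by
  obtain ⟨hnonneg, -, hE⟩ := hA s hs
  rw [naturePMF_apply, Ne, ENNReal.ofReal_eq_zero, not_le, (hnonneg t).lt_iff_ne', hE,
    Function.mem_support]

/-- The distribution of the successor of the state `s` of a play with previous states `h`, where
terminal states are repeated as in `MC`. -/
def stepPMF (h : List S) (s : S) : PMF S :=
  if hs : A.owner s = Player.nature then naturePMF hA hs
  else if A.E s = ∅ then PMF.pure s
  else if A.owner s = Player.one then PMF.pure (σ1.next h s)
  else PMF.pure (σ2.next h s)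

theorem stepPMF_nature (hs : A.owner s = Player.nature) :
    stepPMF hA σ1 σ2 h s = naturePMF hA hs :=
  dif_pos hs

theorem stepPMF_terminal (hs : A.E s = ∅) : stepPMF hA σ1 σ2 h s = PMF.pure s := by
  have hnature : A.owner s ≠ Player.nature := fun ho => hA.E_ne_empty ho hs
  rw [stepPMF, dif_neg hnature, if_pos hs]

theorem stepPMF_one (ho : A.owner s = Player.one) (hs : A.E s ≠ ∅) :
    stepPMF hA σ1 σ2 h s = PMF.pure (σ1.next h s) := by
  simp [stepPMF, ho, hs]

theorem stepPMF_two (ho : A.owner s = Player.two) (hs : A.E s ≠ ∅) :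
    stepPMF hA σ1 σ2 h s = PMF.pure (σ2.next h s) := by
  simp [stepPMF, ho, hs]

/-- The transitions of the Markov chain `M^{s0}_{σ1,σ2}`, as history-dependent transitions. -/
def transition (s0 : S) : List S → PMF S
  | [] => PMF.pure s0
  | s :: l => stepPMF hA σ1 σ2 (s :: l).dropLast ((s :: l).getLast (List.cons_ne_nil s l))

theorem transition_nil : transition hA σ1 σ2 s0 [] = PMF.pure s0 := rfl

theorem transition_concat (l : List S) :
    transition hA σ1 σ2 s0 (l ++ [s]) = stepPMF hA σ1 σ2 l s := by
  cases l with
  | nil => rfl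
  | cons a l =>
    change stepPMF hA σ1 σ2 ((a :: l) ++ [s]).dropLast (((a :: l) ++ [s]).getLast (by simp)) = _
    rw [List.dropLast_concat, List.getLast_append_singleton]

theorem transition_cons_cons (l : List S) :
    transition hA σ1 σ2 s0 (s :: t :: l) =
      transition hA (σ1.tail s) (σ2.tail s) t (t :: l) := rfl

variable {σ1 τ1 σ2 τ2} in
theorem transition_congr (h1 : σ1.AgreesFrom t τ1) (h2 : σ2.AgreesFrom t τ2) (l : List S) :
    transition hA σ1 σ2 s0 (t :: l) = transition hA τ1 τ2 s0 (t :: l) := by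
  have hhead : (t :: l).dropLast.headD ((t :: l).getLast (List.cons_ne_nil t l)) = t := by
    cases l <;> rfl
  simp only [transition, stepPMF, h1 _ _ hhead, h2 _ _ hhead]

variable {σ1 σ2}

theorem MC.head?_eq {l : List S} (hl : MC A σ1 σ2 s0 l) : l.head? = some s0 := by
  induction hl with
  | root => rfl
  | one l | two l | nature l | term l => cases l <;> simp_all

theorem MC.of_concat (hl : MC A σ1 σ2 s0 (h ++ [s, t])) :
    MC A σ1 σ2 s0 (h ++ [s]) ∧ stepPMF hA σ1 σ2 h s t ≠ 0 := by
  have hinj : ∀ {h' : List S} {s' t' : S}, h ++ [s, t] = h' ++ [s', t'] →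
      h = h' ∧ s = s' ∧ t = t' := fun heq => by simpa using List.append_inj' heq rfl
  generalize hL : h ++ [s, t] = L at hl
  cases hl with
  | root => simp [List.append_eq_singleton_iff] at hL
  | one h' s' hl ho hs =>
    obtain ⟨rfl, rfl, rfl⟩ := hinj hL
    simp [hl, stepPMF_one hA σ1 σ2 ho hs]
  | two h' s' hl ho hs =>
    obtain ⟨rfl, rfl, rfl⟩ := hinj hL
    simp [hl, stepPMF_two hA σ1 σ2 ho hs]
  | nature h' s' t' hl ho ht =>
    obtain ⟨rfl, rfl, rfl⟩ := hinj hL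
    rw [stepPMF_nature hA σ1 σ2 ho, naturePMF_ne_zero_iff]
    exact ⟨hl, ht⟩
  | term h' s' hl hs =>
    obtain ⟨rfl, rfl, rfl⟩ := hinj hL
    simp [hl, stepPMF_terminal hA σ1 σ2 hs]

theorem MC.concat (hl : MC A σ1 σ2 s0 (h ++ [s])) (ht : stepPMF hA σ1 σ2 h s t ≠ 0) :
    MC A σ1 σ2 s0 (h ++ [s, t]) := by
  by_cases hs : A.E s = ∅
  · obtain rfl : t = s := by simpa [stepPMF_terminal hA σ1 σ2 hs] using ht
    exact .term h t hl hs
  cases ho : A.owner s with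
  | one =>
    obtain rfl : t = σ1.next h s := by simpa [stepPMF_one hA σ1 σ2 ho hs] using ht
    exact .one h s hl ho hs
  | two =>
    obtain rfl : t = σ2.next h s := by simpa [stepPMF_two hA σ1 σ2 ho hs] using ht
    exact .two h s hl ho hs
  | nature =>
    rw [stepPMF_nature hA σ1 σ2 ho, naturePMF_ne_zero_iff] at ht
    exact .nature h s t hl ho ht

theorem ofReal_stepProb_eq_stepPMF (ht : stepPMF hA σ1 σ2 h s t ≠ 0) :
    ENNReal.ofReal (stepProb A s t) = stepPMF hA σ1 σ2 h s t := by
  have hpure : ∀ {a : S}, PMF.pure a t ≠ 0 → ENNReal.ofReal 1 = PMF.pure a t := by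
    intro a ha
    obtain rfl : t = a := by simpa using ha
    simp
  by_cases ho : A.owner s = Player.nature
  · rw [stepPMF_nature hA σ1 σ2 ho, stepProb, if_pos ho, naturePMF_apply]
  · rw [stepProb, if_neg ho]
    rw [stepPMF, dif_neg ho] at ht ⊢
    split_ifs at ht ⊢ <;> exact hpure ht

theorem pathProb_concat (A : Arena S) (h : List S) (s t : S) :
    pathProb A (h ++ [s, t]) = pathProb A (h ++ [s]) * stepProb A s t := by
  induction h with
  | nil => simp [pathProb]
  | cons a h ih =>
    cases h with
    | nil => simp [pathProb]
    | cons b h =>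
      simp only [List.cons_append, pathProb] at ih ⊢
      rw [ih, mul_assoc]

theorem ofReal_cylWeight_singleton (t : S) :
    ENNReal.ofReal (cylWeight A σ1 σ2 s0 [t]) = PMF.pure s0 t := by
  have hMC : MC A σ1 σ2 s0 [t] ↔ t = s0 :=
    ⟨fun hl => by simpa using hl.head?_eq, by rintro rfl; exact .root⟩
  by_cases ht : t = s0 <;> simp [cylWeight, pathProb, hMC, ht, MC.root]

theorem ofReal_cylWeight_concat (h : List S) (s t : S) :
    ENNReal.ofReal (cylWeight A σ1 σ2 s0 (h ++ [s, t])) =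
      ENNReal.ofReal (cylWeight A σ1 σ2 s0 (h ++ [s])) * stepPMF hA σ1 σ2 h s t := by
  by_cases hMC : MC A σ1 σ2 s0 (h ++ [s, t])
  · obtain ⟨hl, ht⟩ := hMC.of_concat hA
    have hstep := ofReal_stepProb_eq_stepPMF hA ht
    have hnonneg : 0 ≤ stepProb A s t := by
      by_contra! hneg
      exact ht (hstep ▸ ENNReal.ofReal_of_nonpos hneg.le)
    rw [cylWeight, if_pos hMC, cylWeight, if_pos hl, pathProb_concat,
      ENNReal.ofReal_mul' hnonneg, hstep]
  · have hzero : ¬ MC A σ1 σ2 s0 (h ++ [s]) ∨ stepPMF hA σ1 σ2 h s t = 0 :=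
      not_and_or.1 (fun hl => hMC (hl.1.concat hA hl.2)) |>.imp_right not_not.1
    rcases hzero with hl | ht
    · simp [cylWeight, hMC, hl]
    · simp [cylWeight, hMC, ht]

open MeasureTheory

theorem isPathLaw_transition_iff {μ : Measure (PathSpace S)} :
    IsPathLaw (transition hA σ1 σ2 s0) μ ↔ IsProbabilityMeasure μ ∧
      ∀ l : List S, l ≠ [] → μ (cyl l) = ENNReal.ofReal (cylWeight A σ1 σ2 s0 l) := by
  constructor
  · rintro ⟨hμ, hconcat⟩
    refine ⟨hμ, fun l hl => ?_⟩
    induction l using List.reverseRecOn with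
    | nil => exact absurd rfl hl
    | append_singleton l t ih =>
      rcases List.eq_nil_or_concat' l with rfl | ⟨l, s, rfl⟩
      · rw [hconcat, cyl_nil, measure_univ, one_mul, transition_nil, List.nil_append,
          ofReal_cylWeight_singleton]
      · rw [hconcat, ih (by simp), transition_concat, ← ofReal_cylWeight_concat hA]
        simp
  · rintro ⟨hμ, hcyl⟩
    refine ⟨hμ, fun l t => ?_⟩
    rw [hcyl _ (by simp)]
    rcases List.eq_nil_or_concat' l with rfl | ⟨l, s, rfl⟩
    · simp [transition_nil, ofReal_cylWeight_singleton, -PMF.pure_apply]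
    · rw [hcyl _ (by simp), transition_concat, ← ofReal_cylWeight_concat hA]
      simp

end Transitions

section PathMeasure

open MeasureTheory

variable {A : Arena S} {σ1 τ1 : Strategy A Player.one} {σ2 τ2 : Strategy A Player.two}

theorem pathMeasure_eq_pathLaw (hA : A.Wellformed) (s0 : S) :
    pathMeasure A σ1 σ2 s0 = pathLaw (transition hA σ1 σ2 s0) := by
  have hex : ∃ μ : Measure (PathSpace S), IsProbabilityMeasure μ ∧
      ∀ l : List S, l ≠ [] → μ (cyl l) = ENNReal.ofReal (cylWeight A σ1 σ2 s0 l) :=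
    ⟨_, (isPathLaw_transition_iff hA).1 (isPathLaw_pathLaw _)⟩
  rw [pathMeasure, dif_pos hex]
  exact ((isPathLaw_transition_iff hA).2 hex.choose_spec).eq_pathLaw

theorem isProbabilityMeasure_pathMeasure (hA : A.Wellformed) (s0 : S) :
    IsProbabilityMeasure (pathMeasure A σ1 σ2 s0) := by
  rw [pathMeasure_eq_pathLaw hA]
  infer_instance

theorem pathMeasure_congr (hA : A.Wellformed) {t : S} (h1 : σ1.AgreesFrom t τ1)
    (h2 : σ2.AgreesFrom t τ2) :
    pathMeasure A σ1 σ2 t = pathMeasure A τ1 τ2 t := by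
  simp only [pathMeasure_eq_pathLaw hA, pathLaw_eq_map_cons (transition_nil hA ..),
    transition_congr hA h1 h2]

theorem pathMeasure_eq_map_cons (hA : A.Wellformed) (s : S) :
    pathMeasure A σ1 σ2 s =
      (Measure.sum fun t => stepPMF hA σ1 σ2 [] s t •
        pathMeasure A (σ1.tail s) (σ2.tail s) t).map (PathSpace.cons s) := by
  simp only [pathMeasure_eq_pathLaw hA]
  rw [pathLaw_eq_map_cons (transition_nil hA ..), pathLaw_eq_sum_map_cons]
  congr! 3 with t
  simp only [pathLaw_eq_map_cons (transition_nil hA ..), transition_cons_cons]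
  rfl

theorem ae_pathMeasure_zero_eq (hA : A.Wellformed) (s : S) :
    ∀ᵐ u ∂pathMeasure A σ1 σ2 s, u 0 = s := by
  rw [pathMeasure_eq_map_cons hA, ae_map_iff (PathSpace.measurable_cons s).aemeasurable
    (measurableSet_coord (· = s) 0)]
  exact .of_forall fun _ => rfl

end PathMeasure

/-! ### Expected payoffs -/

section Expectation

variable {α : Type*} {p : PMF α} {f g : α → ℝ} {C : ℝ}

/-- The expectation of `f` under the distribution `p`. -/
def pmfExpectation (p : PMF α) (f : α → ℝ) : ℝ := ∑' t, (p t).toReal * f t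

theorem hasSum_toReal_pmf (p : PMF α) : HasSum (fun t => (p t).toReal) 1 := by
  have hsum := ENNReal.hasSum_toReal (f := p) p.tsum_coe_ne_top
  rwa [← ENNReal.tsum_toReal_eq p.apply_ne_top, p.tsum_coe, ENNReal.toReal_one] at hsum

theorem norm_toReal_pmf_mul_le (hf : ∀ t, |f t| ≤ C) (t : α) :
    ‖(p t).toReal * f t‖ ≤ (p t).toReal * C := by
  rw [norm_mul, Real.norm_of_nonneg ENNReal.toReal_nonneg]
  exact mul_le_mul_of_nonneg_left (hf t) ENNReal.toReal_nonneg

theorem summable_toReal_pmf_mul (hf : ∀ t, |f t| ≤ C) : Summable fun t => (p t).toReal * f t :=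
  .of_norm_bounded ((hasSum_toReal_pmf p).summable.mul_right C) (norm_toReal_pmf_mul_le hf)

theorem abs_pmfExpectation_le (hf : ∀ t, |f t| ≤ C) : |pmfExpectation p f| ≤ C := by
  simpa [pmfExpectation] using
    tsum_of_norm_bounded ((hasSum_toReal_pmf p).mul_right C) (norm_toReal_pmf_mul_le hf)

theorem pmfExpectation_le_add {ε : ℝ} (hf : ∀ t, |f t| ≤ C) (hg : ∀ t, |g t| ≤ C)
    (hfg : ∀ t, f t ≤ g t + ε) : pmfExpectation p f ≤ pmfExpectation p g + ε := by
  have hsum := (summable_toReal_pmf_mul (p := p) hg).hasSum.add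
    ((hasSum_toReal_pmf p).mul_right ε)
  rw [one_mul] at hsum
  refine hasSum_le (fun t => ?_) (summable_toReal_pmf_mul hf).hasSum hsum
  rw [← mul_add]
  exact mul_le_mul_of_nonneg_left (hfg t) ENNReal.toReal_nonneg

theorem pmfExpectation_pure (a : α) (f : α → ℝ) : pmfExpectation (PMF.pure a) f = f a := by
  rw [pmfExpectation, tsum_eq_single a fun t ht => by simp [ht]]
  simp

theorem pmfExpectation_naturePMF {A : Arena S} (hA : A.Wellformed) {s : S}
    (hs : A.owner s = Player.nature) (f : S → ℝ) :
    pmfExpectation (naturePMF hA hs) f = ∑' t : A.E s, A.prob s t * f t := by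
  obtain ⟨hnonneg, -, hE⟩ := hA s hs
  simp only [pmfExpectation, naturePMF_apply, ENNReal.toReal_ofReal (hnonneg _)]
  refine (tsum_subtype_eq_of_support_subset (f := fun t => A.prob s t * f t) ?_).symm
  rw [hE]
  exact Function.support_mul_subset_left _ _

end Expectation

section BoundedFamilies

variable {ι : Type*} {f : ι → ℝ} {C : ℝ}

theorem bddAbove_range_of_abs_le (hf : ∀ i, |f i| ≤ C) : BddAbove (Set.range f) :=
  ⟨C, Set.forall_mem_range.2 fun i => (abs_le.1 (hf i)).2⟩

theorem bddBelow_range_of_abs_le (hf : ∀ i, |f i| ≤ C) : BddBelow (Set.range f) :=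
  ⟨-C, Set.forall_mem_range.2 fun i => (abs_le.1 (hf i)).1⟩

theorem abs_ciSup_le_of_abs_le [Nonempty ι] (hf : ∀ i, |f i| ≤ C) : |⨆ i, f i| ≤ C := by
  obtain ⟨i⟩ := ‹Nonempty ι›
  exact abs_le.2 ⟨(abs_le.1 (hf i)).1.trans (le_ciSup (bddAbove_range_of_abs_le hf) i),
    ciSup_le fun j => (abs_le.1 (hf j)).2⟩

theorem abs_ciInf_le_of_abs_le [Nonempty ι] (hf : ∀ i, |f i| ≤ C) : |⨅ i, f i| ≤ C := by
  obtain ⟨i⟩ := ‹Nonempty ι›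
  exact abs_le.2 ⟨le_ciInf fun j => (abs_le.1 (hf j)).1,
    (ciInf_le (bddBelow_range_of_abs_le hf) i).trans (abs_le.1 (hf i)).2⟩

end BoundedFamilies

/-- A bounded measurable payoff that is `R s` on the paths starting in a terminal state `s` and is
not affected by the removal of a non-terminal first state. -/
structure IsTailPayoff (A : Arena S) (R : S → ℝ) (Φ : PathSpace S → ℝ) : Prop where
  measurable : Measurable Φ
  bounded : ∃ C, ∀ u, |Φ u| ≤ C
  of_terminal : ∀ u, A.E (u 0) = ∅ → Φ u = R (u 0)
  cons : ∀ s u, A.E s ≠ ∅ → Φ (PathSpace.cons s u) = Φ u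

section ExpectedPayoff

open MeasureTheory

variable {A : Arena S} {R : S → ℝ} {Φ : PathSpace S → ℝ} {C : ℝ} {s : S}

/-- The expected payoff `E(M^s_{σ1,σ2})` of an arbitrary payoff function `Φ`. -/
def expPayoff (A : Arena S) (Φ : PathSpace S → ℝ) (σ1 : Strategy A Player.one)
    (σ2 : Strategy A Player.two) (s : S) : ℝ :=
  ∫ u, Φ u ∂pathMeasure A σ1 σ2 s

/-- The upper value of the game on `A` with an arbitrary payoff function `Φ`. -/
def upperValueOf (A : Arena S) (Φ : PathSpace S → ℝ) (s : S) : ℝ :=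
  ⨅ σ2 : Strategy A Player.two, ⨆ σ1 : Strategy A Player.one, expPayoff A Φ σ1 σ2 s

theorem abs_expPayoff_le (hA : A.Wellformed) (hC : ∀ u, |Φ u| ≤ C) (σ1 : Strategy A Player.one)
    (σ2 : Strategy A Player.two) (s : S) : |expPayoff A Φ σ1 σ2 s| ≤ C := by
  have : IsProbabilityMeasure (pathMeasure A σ1 σ2 s) := isProbabilityMeasure_pathMeasure hA s
  simpa [expPayoff] using norm_integral_le_of_norm_le_const (μ := pathMeasure A σ1 σ2 s)
    (.of_forall fun u => (Real.norm_eq_abs _).trans_le (hC u))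

theorem abs_iSup_expPayoff_le (hA : A.Wellformed) (hC : ∀ u, |Φ u| ≤ C)
    (σ2 : Strategy A Player.two) (s : S) : |⨆ σ1, expPayoff A Φ σ1 σ2 s| ≤ C :=
  abs_ciSup_le_of_abs_le fun σ1 => abs_expPayoff_le hA hC σ1 σ2 s

theorem abs_upperValueOf_le (hA : A.Wellformed) (hC : ∀ u, |Φ u| ≤ C) (s : S) :
    |upperValueOf A Φ s| ≤ C :=
  abs_ciInf_le_of_abs_le fun σ2 => abs_iSup_expPayoff_le hA hC σ2 s

theorem expPayoff_congr (hA : A.Wellformed) {σ1 τ1 : Strategy A Player.one}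
    {σ2 τ2 : Strategy A Player.two} (h1 : σ1.AgreesFrom s τ1) (h2 : σ2.AgreesFrom s τ2) :
    expPayoff A Φ σ1 σ2 s = expPayoff A Φ τ1 τ2 s := by
  rw [expPayoff, expPayoff, pathMeasure_congr hA h1 h2]

namespace IsTailPayoff

theorem integrable (hΦ : IsTailPayoff A R Φ) (μ : Measure (PathSpace S)) [IsFiniteMeasure μ] :
    Integrable Φ μ := by
  obtain ⟨C, hC⟩ := hΦ.bounded
  exact .of_bound hΦ.measurable.aestronglyMeasurable C (.of_forall hC)

theorem expPayoff_of_terminal (hΦ : IsTailPayoff A R Φ) (hA : A.Wellformed) (hs : A.E s = ∅)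
    (σ1 : Strategy A Player.one) (σ2 : Strategy A Player.two) : expPayoff A Φ σ1 σ2 s = R s := by
  have : IsProbabilityMeasure (pathMeasure A σ1 σ2 s) := isProbabilityMeasure_pathMeasure hA s
  have hae : Φ =ᵐ[pathMeasure A σ1 σ2 s] fun _ => R s := by
    filter_upwards [ae_pathMeasure_zero_eq hA s] with u hu
    rw [hΦ.of_terminal u (hu ▸ hs), hu]
  simp [expPayoff, integral_congr_ae hae]

theorem expPayoff_eq_pmfExpectation (hΦ : IsTailPayoff A R Φ) (hA : A.Wellformed)
    (hs : A.E s ≠ ∅) (σ1 : Strategy A Player.one) (σ2 : Strategy A Player.two) :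
    expPayoff A Φ σ1 σ2 s =
      pmfExpectation (stepPMF hA σ1 σ2 [] s) (expPayoff A Φ (σ1.tail s) (σ2.tail s)) := by
  have : IsProbabilityMeasure (pathMeasure A σ1 σ2 s) := isProbabilityMeasure_pathMeasure hA s
  have hint := hΦ.integrable (pathMeasure A σ1 σ2 s)
  have hmeas := PathSpace.measurable_cons s
  rw [pathMeasure_eq_map_cons hA, integrable_map_measure hΦ.measurable.aestronglyMeasurable
    hmeas.aemeasurable] at hint
  have hcons : Φ ∘ PathSpace.cons s = Φ := funext fun u => hΦ.cons s u hs
  rw [hcons] at hint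
  rw [expPayoff, pathMeasure_eq_map_cons hA,
    integral_map hmeas.aemeasurable hΦ.measurable.aestronglyMeasurable]
  simp only [hΦ.cons s _ hs, integral_sum_measure hint, integral_smul_measure, smul_eq_mul]
  rfl

/-! ### The Bellman equation -/

theorem exists_forall_expPayoff_prepend_le (hΦ : IsTailPayoff A R Φ) (hA : A.Wellformed)
    (hs : A.E s ≠ ∅) {ε : ℝ} (hε : 0 < ε) :
    ∃ g : S → Strategy A Player.two, ∀ σ1 σ2, expPayoff A Φ σ1 (σ2.prepend g) s ≤
      pmfExpectation (stepPMF hA σ1 σ2 [] s) (upperValueOf A Φ) + ε := by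
  obtain ⟨C, hC⟩ := hΦ.bounded
  have hnear : ∀ t, ∃ τ2, ⨆ σ1, expPayoff A Φ σ1 τ2 t < upperValueOf A Φ t + ε := fun t =>
    exists_lt_of_ciInf_lt (lt_add_of_pos_right _ hε)
  choose g hg using hnear
  refine ⟨g, fun σ1 σ2 => ?_⟩
  rw [hΦ.expPayoff_eq_pmfExpectation hA hs]
  refine pmfExpectation_le_add (abs_expPayoff_le hA hC _ _) (abs_upperValueOf_le hA hC) fun t => ?_
  calc expPayoff A Φ (σ1.tail s) ((σ2.prepend g).tail s) t
      = expPayoff A Φ (σ1.tail s) (g t) t :=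
        expPayoff_congr hA (.refl t _) (σ2.agreesFrom_tail_prepend g s t)
    _ ≤ ⨆ τ1, expPayoff A Φ τ1 (g t) t :=
        le_ciSup (bddAbove_range_of_abs_le fun τ1 => abs_expPayoff_le hA hC τ1 (g t) t) _
    _ ≤ upperValueOf A Φ t + ε := (hg t).le

theorem exists_forall_le_expPayoff_prepend (hΦ : IsTailPayoff A R Φ) (hA : A.Wellformed)
    (hs : A.E s ≠ ∅) (σ2 : Strategy A Player.two) {ε : ℝ} (hε : 0 < ε) :
    ∃ g : S → Strategy A Player.one, ∀ σ1,
      pmfExpectation (stepPMF hA σ1 σ2 [] s) (upperValueOf A Φ) ≤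
        expPayoff A Φ (σ1.prepend g) σ2 s + ε := by
  obtain ⟨C, hC⟩ := hΦ.bounded
  have hnear : ∀ t, ∃ τ1, (⨆ σ1, expPayoff A Φ σ1 (σ2.tail s) t) - ε <
      expPayoff A Φ τ1 (σ2.tail s) t := fun t => exists_lt_of_lt_ciSup (sub_lt_self _ hε)
  choose g hg using hnear
  refine ⟨g, fun σ1 => ?_⟩
  rw [hΦ.expPayoff_eq_pmfExpectation hA hs]
  refine pmfExpectation_le_add (abs_upperValueOf_le hA hC) (abs_expPayoff_le hA hC _ _) fun t => ?_
  calc upperValueOf A Φ t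
      ≤ ⨆ τ1, expPayoff A Φ τ1 (σ2.tail s) t :=
        ciInf_le (bddBelow_range_of_abs_le fun τ2 => abs_iSup_expPayoff_le hA hC τ2 t) _
    _ ≤ expPayoff A Φ (g t) (σ2.tail s) t + ε := (sub_lt_iff_lt_add.1 (hg t)).le
    _ = expPayoff A Φ ((σ1.prepend g).tail s) (σ2.tail s) t + ε := by
        rw [expPayoff_congr hA (σ1.agreesFrom_tail_prepend g s t) (.refl t _)]

theorem upperValueOf_eq_iInf_iSup_pmfExpectation (hΦ : IsTailPayoff A R Φ) (hA : A.Wellformed)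
    (hs : A.E s ≠ ∅) :
    upperValueOf A Φ s =
      ⨅ σ2, ⨆ σ1, pmfExpectation (stepPMF hA σ1 σ2 [] s) (upperValueOf A Φ) := by
  obtain ⟨C, hC⟩ := hΦ.bounded
  have hexp : ∀ σ1 σ2, |pmfExpectation (stepPMF hA σ1 σ2 [] s) (upperValueOf A Φ)| ≤ C :=
    fun _ _ => abs_pmfExpectation_le (abs_upperValueOf_le hA hC)
  refine le_antisymm (le_ciInf fun σ2 => le_of_forall_pos_le_add fun ε hε => ?_)
    (le_ciInf fun σ2 => le_of_forall_pos_le_add fun ε hε => ?_)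
  · obtain ⟨g, hg⟩ := hΦ.exists_forall_expPayoff_prepend_le hA hs hε
    calc upperValueOf A Φ s
        ≤ ⨆ σ1, expPayoff A Φ σ1 (σ2.prepend g) s :=
          ciInf_le (bddBelow_range_of_abs_le fun τ2 => abs_iSup_expPayoff_le hA hC τ2 s) _
      _ ≤ (⨆ σ1, pmfExpectation (stepPMF hA σ1 σ2 [] s) (upperValueOf A Φ)) + ε :=
          ciSup_le fun σ1 => (hg σ1 σ2).trans <| add_le_add_left
            (le_ciSup (bddAbove_range_of_abs_le fun τ1 => hexp τ1 σ2) σ1) ε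
  · obtain ⟨g, hg⟩ := hΦ.exists_forall_le_expPayoff_prepend hA hs σ2 hε
    calc ⨅ σ2, ⨆ σ1, pmfExpectation (stepPMF hA σ1 σ2 [] s) (upperValueOf A Φ)
        ≤ ⨆ σ1, pmfExpectation (stepPMF hA σ1 σ2 [] s) (upperValueOf A Φ) :=
          ciInf_le (bddBelow_range_of_abs_le fun τ2 =>
            abs_ciSup_le_of_abs_le fun τ1 => hexp τ1 τ2) σ2
      _ ≤ (⨆ σ1, expPayoff A Φ σ1 σ2 s) + ε :=
          ciSup_le fun σ1 => (hg σ1).trans <| add_le_add_left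
            (le_ciSup (bddAbove_range_of_abs_le fun τ1 => abs_expPayoff_le hA hC τ1 σ2 s) _) ε

end IsTailPayoff

end ExpectedPayoff

theorem upperValue_fixedPoint_bellman_general {A : Arena S} (hA : A.Wellformed) {R : S → ℝ}
    {Φ : PathSpace S → ℝ} (hΦ : IsTailPayoff A R Φ) :
    bellman A R (upperValueOf A Φ) = upperValueOf A Φ := by
  funext s
  rw [bellman]
  split_ifs with hs
  · simp only [upperValueOf, hΦ.expPayoff_of_terminal hA hs, ciSup_const, ciInf_const]
  rw [hΦ.upperValueOf_eq_iInf_iSup_pmfExpectation hA hs]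
  cases ho : A.owner s with
  | one =>
    simp only [stepPMF_one hA _ _ ho hs, pmfExpectation_pure, ciInf_const]
    rw [← Strategy.range_next_nil ho hs, ← Set.range_comp]
    rfl
  | two =>
    simp only [stepPMF_two hA _ _ ho hs, pmfExpectation_pure, ciSup_const]
    rw [← Strategy.range_next_nil ho hs, ← Set.range_comp]
    rfl
  | nature =>
    simp only [stepPMF_nature hA _ _ ho, pmfExpectation_naturePMF, ciSup_const, ciInf_const]

/-! ### Parity payoffs -/

section ParityPayoff

variable {A : Arena S} {pri : S → ℕ} {R : S → ℝ} {u : PathSpace S}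

/-- The priorities that occur infinitely often along the path `u`. -/
def recurrentPriorities (pri : S → ℕ) (u : PathSpace S) : Set ℕ :=
  {n | {i | pri (u i) = n}.Infinite}

theorem mem_recurrentPriorities_iff {n : ℕ} :
    n ∈ recurrentPriorities pri u ↔ ∃ᶠ i in Filter.atTop, pri (u i) = n :=
  Nat.frequently_atTop_iff_infinite.symm

theorem recurrentPriorities_cons (s : S) :
    recurrentPriorities pri (PathSpace.cons s u) = recurrentPriorities pri u := by
  ext n
  rw [mem_recurrentPriorities_iff, mem_recurrentPriorities_iff]
  conv_lhs => rw [← Filter.map_add_atTop_eq_nat 1, Filter.frequently_map]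
  rfl

theorem recurrentPriorities_subset_range : recurrentPriorities pri u ⊆ Set.range pri := by
  intro n hn
  obtain ⟨i, hi⟩ := Set.Infinite.nonempty hn
  exact ⟨u i, hi⟩

theorem nonempty_recurrentPriorities (hpri : (Set.range pri).Finite) :
    (recurrentPriorities pri u).Nonempty := by
  have := hpri.to_subtype
  obtain ⟨n, hn⟩ := Finite.exists_infinite_fiber fun i => Set.rangeFactorization pri (u i)
  refine ⟨n, (Set.infinite_coe_iff.1 hn).mono fun i hi => ?_⟩
  exact congrArg Subtype.val hi

theorem isGreatest_recurrentPriorities_sSup (hpri : (Set.range pri).Finite) :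
    IsGreatest (recurrentPriorities pri u) (sSup (recurrentPriorities pri u)) :=
  (hpri.subset recurrentPriorities_subset_range).isCompact.isGreatest_sSup
    (nonempty_recurrentPriorities hpri)

theorem measurableSet_mem_recurrentPriorities (pri : S → ℕ) (n : ℕ) :
    MeasurableSet {u : PathSpace S | n ∈ recurrentPriorities pri u} := by
  simp only [mem_recurrentPriorities_iff]
  suffices hlimsup : {u : PathSpace S | ∃ᶠ i in Filter.atTop, pri (u i) = n} =
      Filter.limsup (fun i => {u : PathSpace S | pri (u i) = n}) Filter.atTop by
    rw [hlimsup]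
    exact MeasurableSet.measurableSet_limsup fun i => measurableSet_coord (pri · = n) i
  ext u
  simp only [Filter.mem_limsup_iff_frequently_mem, Set.mem_ofPred_eq]

theorem measurableSet_even_sSup_recurrentPriorities (hpri : (Set.range pri).Finite) :
    MeasurableSet {u : PathSpace S | Even (sSup (recurrentPriorities pri u))} := by
  have heven (u : PathSpace S) : Even (sSup (recurrentPriorities pri u)) ↔
      ∃ n, Even n ∧ IsGreatest (recurrentPriorities pri u) n :=
    ⟨fun h => ⟨_, h, isGreatest_recurrentPriorities_sSup hpri⟩,
      fun ⟨_, hn, hgreatest⟩ => hgreatest.csSup_eq ▸ hn⟩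
  have hmem := fun n => measurableSet_setOfPred.1 (measurableSet_mem_recurrentPriorities pri n)
  simp only [heven, IsGreatest, upperBounds, Set.mem_ofPred_eq]
  apply measurableSet_setOfPred.2
  fun_prop

theorem measurable_payoff (hpri : (Set.range pri).Finite) : Measurable (payoff A pri R) := by
  set T : Set (PathSpace S) := {u | ∃ i, A.E (u i) = ∅}
  have hT : MeasurableSet T := by
    simp only [T, Set.ofPred_exists]
    exact .iUnion fun i => measurableSet_coord (A.E · = ∅) i
  refine measurable_of_restrict_of_restrict_compl hT ?_ ?_
  · have hfind : T.domRestrict (payoff A pri R) = fun u : T => R (u.1 (Nat.find u.2)) :=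
      funext fun u => dif_pos u.2
    rw [hfind]
    exact Measurable.find (f := fun n (u : T) => R (u.1 n)) (p := fun n u => A.E (u.1 n) = ∅)
      (fun n => (measurable_comp_coord R n).comp measurable_subtype_coe)
      (fun n => measurable_subtype_coe (measurableSet_coord (A.E · = ∅) n)) fun u => u.2
  · have hparity : Tᶜ.domRestrict (payoff A pri R) = fun u : (Tᶜ : Set (PathSpace S)) =>
        if Even (sSup (recurrentPriorities pri u.1)) then (1 : ℝ) else 0 :=
      funext fun u => dif_neg u.2
    rw [hparity]
    exact .ite (measurable_subtype_coe (measurableSet_even_sSup_recurrentPriorities hpri))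
      measurable_const measurable_const

theorem payoff_mem_Icc (hR : ∀ s, A.E s = ∅ → R s ∈ Set.Icc (0 : ℝ) 1) (u : PathSpace S) :
    payoff A pri R u ∈ Set.Icc (0 : ℝ) 1 := by
  unfold payoff
  split_ifs with hterminal
  · exact hR _ (Nat.find_spec hterminal)
  · simp
  · simp

theorem payoff_of_terminal (hu : A.E (u 0) = ∅) : payoff A pri R u = R (u 0) := by
  have hterminal : ∃ i, A.E (u i) = ∅ := ⟨0, hu⟩
  rw [payoff, dif_pos hterminal, (Nat.find_eq_zero hterminal).2 hu]

theorem payoff_cons {s : S} (hs : A.E s ≠ ∅) (u : PathSpace S) :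
    payoff A pri R (PathSpace.cons s u) = payoff A pri R u := by
  by_cases hu : ∃ i, A.E (u i) = ∅
  · have hcons : ∃ i, A.E (PathSpace.cons s u i) = ∅ := hu.imp' (· + 1) fun _ => id
    rw [payoff, payoff, dif_pos hu, dif_pos hcons, Nat.find_comp_succ hcons hu hs]
    rfl
  · have hcons : ¬ ∃ i, A.E (PathSpace.cons s u i) = ∅ := by
      rintro ⟨_ | i, hi⟩
      exacts [hs hi, hu ⟨i, hi⟩]
    have hpri := recurrentPriorities_cons (pri := pri) (u := u) s
    unfold recurrentPriorities at hpri
    rw [payoff, payoff, dif_neg hu, dif_neg hcons, hpri]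

theorem isTailPayoff_payoff (hpri : (Set.range pri).Finite)
    (hR : ∀ s, A.E s = ∅ → R s ∈ Set.Icc (0 : ℝ) 1) : IsTailPayoff A R (payoff A pri R) where
  measurable := measurable_payoff hpri
  bounded := ⟨1, fun u => abs_le.2
    ⟨neg_one_lt_zero.le.trans (payoff_mem_Icc hR u).1, (payoff_mem_Icc hR u).2⟩⟩
  of_terminal _ := payoff_of_terminal
  cons _ u hs := payoff_cons hs u

end ParityPayoff

/-- **Bellman fixed-point property of the upper value** of a 2½-player parity game. -/
theorem upperValue_fixedPoint_bellman {S : Type} (A : Arena S) (hA : A.Wellformed)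
    (pri : S → ℕ) (hpri : (Set.range pri).Finite)
    (R : S → ℝ) (hR : ∀ s, A.E s = ∅ → R s ∈ Set.Icc (0:ℝ) 1) :
    bellman A R (upperValue A pri R) = upperValue A pri R :=
  upperValue_fixedPoint_bellman_general hA (isTailPayoff_payoff hpri hR)
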